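/- (James/Chandler) Let V be an (n+1)-dimensional vector space over F_q, let A_{s,r} (for s ≤ r, s + r ≤ n+1) be the inclusion matrix of s-dimensional subspaces in r-dimensional subspaces, and let ℓ be a prime not dividing q. Then over the ℓ-adic integers ℤ_ℓ, the matrix A_{s,r} has a diagonal form with diagonal entries the Gaussian binomial coefficients binom(r-i, s-i)_q, each with multiplicity binom(n+1, i)_q - binom(n+1, i-1)_q, for 0 ≤ i ≤ s. -/

import Mathlib

attribute [local instance] Classical.propDecidable

/-- The Gaussian (`q`-)binomial coefficient `[a choose b]_q`, defined via the
`q`-Pascal recursion `[a+1, b+1]_q = [a, b]_q + q^(b+1) [a, b+1]_q`. -/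
def gaussBinom (q : ℕ) : ℕ → ℕ → ℕ
  | _, 0 => 1
  | 0, _ + 1 => 0
  | a + 1, b + 1 => gaussBinom q a b + q ^ (b + 1) * gaussBinom q a (b + 1)

/-!
Let `k` be a field with `q ≠ 0` in `k`, and consider the span of the rows of all `A_{i,r}` with
`i ≤ s`. Its dimension is at least `[n+1, s]_q`: a subspace of `F × V` either contains `(1, 0)` or
is the graph of a functional on a subspace of `V`, and averaging over functionals embeds, next to
the row space of `V`, one row space of each quotient `V ⧸ ⟨v⟩` into the row space of `F × V`. The
dimensions then obey `[m+2, s+1]_q = [m+1, s+1]_q + [m+1, s]_q + (q^(m+1) - 1) [m, s]_q`.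

Over the residue field one can therefore choose a set `B` of subspaces of dimension at most `s`
such that, for each `i ≤ s`, its members of dimension at most `i` index a basis of the row space
with `r = i`; by the dimension bound the rows indexed by `B` stay independent for every `r ≥ s`
with `s + r ≤ n + 1`. Let `P` and `M` be the inclusion matrices of `B` in the `s`- and
`r`-dimensional subspaces over the local ring. Counting the `s`-subspaces between `U` and `W`
gives `P A_{s,r} = diag([r - dim U, s - dim U]_q) M`, where `P` is invertible and the rows of `M`
extend to an invertible matrix.
-/

open Module

section GaussBinom

variable (q : ℕ)

@[simp]
theorem gaussBinom_zero_right (a : ℕ) : gaussBinom q a 0 = 1 := by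
  cases a <;> rfl

theorem gaussBinom_succ_succ (a b : ℕ) :
    gaussBinom q (a + 1) (b + 1) = gaussBinom q a b + q ^ (b + 1) * gaussBinom q a (b + 1) :=
  rfl

theorem gaussBinom_eq_zero_of_lt : ∀ {a b : ℕ}, a < b → gaussBinom q a b = 0
  | 0, _ + 1, _ => rfl
  | a + 1, b + 1, h => by
    rw [gaussBinom_succ_succ, gaussBinom_eq_zero_of_lt (by lia : a < b),
      gaussBinom_eq_zero_of_lt (by lia : a < b + 1), mul_zero, add_zero]

theorem pow_sub_one_mul_gaussBinom_succ_succ : ∀ a b : ℕ,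
    ((q : ℤ) ^ (b + 1) - 1) * gaussBinom q (a + 1) (b + 1) =
      ((q : ℤ) ^ (a + 1) - 1) * gaussBinom q a b
  | 0, 0 => by simp [gaussBinom_succ_succ, gaussBinom_eq_zero_of_lt]
  | 0, b + 1 => by simp [gaussBinom_eq_zero_of_lt]
  | a + 1, 0 => by
    have h := pow_sub_one_mul_gaussBinom_succ_succ a 0
    rw [gaussBinom_succ_succ]
    simp only [gaussBinom_zero_right] at *
    push_cast at *
    linear_combination (q : ℤ) * h
  | a + 1, b + 1 => by
    have h₁ := pow_sub_one_mul_gaussBinom_succ_succ a (b + 1)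
    have h₂ := pow_sub_one_mul_gaussBinom_succ_succ a b
    have pascal := congrArg (Nat.cast (R := ℤ)) (gaussBinom_succ_succ q a b)
    rw [gaussBinom_succ_succ q (a + 1) (b + 1)]
    push_cast at pascal ⊢
    linear_combination (q : ℤ) ^ (b + 2) * h₁ - (q : ℤ) * (q ^ (a + 1) - 1) * pascal + (q : ℤ) * h₂

theorem gaussBinom_add_two_succ (hq : 0 < q) (m s : ℕ) :
    gaussBinom q (m + 2) (s + 1) =
      gaussBinom q (m + 1) (s + 1) + gaussBinom q (m + 1) s +
        (q ^ (m + 1) - 1) * gaussBinom q m s := by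
  have absorb := pow_sub_one_mul_gaussBinom_succ_succ q m s
  have hpow : 1 ≤ q ^ (m + 1) := Nat.one_le_pow _ _ hq
  rw [gaussBinom_succ_succ q (m + 1) s]
  zify [hpow]
  linear_combination absorb

theorem gaussBinom_mul_prod : ∀ m k : ℕ,
    (gaussBinom q m k : ℤ) * ∏ i : Fin k, ((q : ℤ) ^ k - q ^ (i : ℕ)) =
      ∏ i : Fin k, ((q : ℤ) ^ m - q ^ (i : ℕ))
  | m, 0 => by simp
  | 0, k + 1 => by
    simp [gaussBinom_eq_zero_of_lt,
      Fin.prod_univ_succ (fun i : Fin (k + 1) => 1 - (q : ℤ) ^ (i : ℕ))]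
  | m + 1, k + 1 => by
    have ih := gaussBinom_mul_prod m k
    have absorb := pow_sub_one_mul_gaussBinom_succ_succ q m k
    have factor (t : ℕ) : ∏ i : Fin (k + 1), ((q : ℤ) ^ (t + 1) - q ^ (i : ℕ)) =
        (q ^ (t + 1) - 1) * (q ^ k * ∏ i : Fin k, ((q : ℤ) ^ t - q ^ (i : ℕ))) := by
      have pow_eq : (q : ℤ) ^ k = ∏ _i : Fin k, (q : ℤ) := by simp
      rw [Fin.prod_univ_succ, pow_eq, ← Finset.prod_mul_distrib, Fin.val_zero, pow_zero]
      congr 1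
      refine Finset.prod_congr rfl fun i _ => ?_
      rw [Fin.val_succ]
      ring
    rw [factor, factor]
    linear_combination (q : ℤ) ^ k * (∏ i : Fin k, ((q : ℤ) ^ k - q ^ (i : ℕ))) * absorb +
      (q : ℤ) ^ k * ((q : ℤ) ^ (m + 1) - 1) * ih

end GaussBinom

section Finrank

variable {F V V₂ : Type*} [Field F] [AddCommGroup V] [Module F V] [AddCommGroup V₂] [Module F V₂]

theorem exists_submodule_finrank_eq {r : ℕ} (h : r ≤ finrank F V) :
    ∃ W : Submodule F V, finrank F W = r := by
  obtain ⟨b, hb, hli⟩ := exists_finset_linearIndependent_of_le_finrank h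
  exact ⟨Submodule.span F b, by rw [finrank_span_finset_eq_card hli, hb]⟩

theorem finrank_span_singleton_le_one (v : V) : finrank F (Submodule.span F {v}) ≤ 1 := by
  simpa using finrank_span_le_card (R := F) ({v} : Set V)

variable [FiniteDimensional F V]

theorem finrank_map_add_finrank_inf_ker (f : V →ₗ[F] V₂) (X : Submodule F V) :
    finrank F (X.map f) + finrank F (X ⊓ LinearMap.ker f : Submodule F V) = finrank F X := by
  rw [← (f.domRestrict X).finrank_range_add_finrank_ker, LinearMap.range_domRestrict,
    LinearMap.ker_domRestrict, ← Submodule.map_comap_subtype, Submodule.finrank_map_subtype_eq]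

theorem finrank_comap_of_surjective {f : V →ₗ[F] V₂} (hf : Function.Surjective f)
    (Y : Submodule F V₂) :
    finrank F (Y.comap f) = finrank F Y + finrank F (LinearMap.ker f) := by
  rw [← finrank_map_add_finrank_inf_ker f (Y.comap f), Submodule.map_comap_eq_of_surjective hf,
    inf_eq_right.2 (LinearMap.ker_le_comap f)]

theorem finrank_comap_mkQ (L : Submodule F V) (Z : Submodule F (V ⧸ L)) :
    finrank F (Z.comap L.mkQ) = finrank F Z + finrank F L := by
  rw [finrank_comap_of_surjective L.mkQ_surjective, Submodule.ker_mkQ]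

end Finrank

section Counting

variable {F V : Type*} [Field F] [AddCommGroup V] [Module F V]

/-- A linearly independent `k`-tuple spanning a subspace of `V` that equals `X` is the same thing
as a linearly independent `k`-tuple in the `k`-dimensional space `X`. -/
noncomputable def linearIndependentSpanEquiv {k : ℕ} {X : Submodule F V} [FiniteDimensional F X]
    (hX : finrank F X = k) :
    {t : {t : Fin k → V // LinearIndependent F t} // Submodule.span F (Set.range t.1) = X} ≃
      {t : Fin k → X // LinearIndependent F t} where
  toFun t := ⟨fun i => ⟨t.1.1 i, t.2.le (Submodule.subset_span ⟨i, rfl⟩)⟩,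
    LinearIndependent.of_comp X.subtype t.1.2⟩
  invFun t := ⟨⟨fun i => t.1 i, t.2.map' X.subtype X.ker_subtype⟩, by
    have htop := t.2.span_eq_top_of_card_eq_finrank' (by simp [hX])
    have := congrArg (Submodule.map X.subtype) htop
    rwa [Submodule.map_span, ← Set.range_comp, Submodule.map_subtype_top] at this⟩
  left_inv _ := rfl
  right_inv _ := rfl

variable [Fintype F] [Finite V]

theorem card_submodule_finrank_eq_mul_prod {k : ℕ} (hk : k ≤ finrank F V) :
    Nat.card {X : Submodule F V // finrank F X = k} *
        ∏ i : Fin k, (Fintype.card F ^ k - Fintype.card F ^ (i : ℕ)) =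
      ∏ i : Fin k, (Fintype.card F ^ finrank F V - Fintype.card F ^ (i : ℕ)) := by
  have := Fintype.ofFinite V
  have := Fintype.ofFinite {X : Submodule F V // finrank F X = k}
  let spanOf (t : {t : Fin k → V // LinearIndependent F t}) :
      {X : Submodule F V // finrank F X = k} :=
    ⟨Submodule.span F (Set.range t.1), by simpa using finrank_span_eq_card t.2⟩
  have card_fiber (X : {X : Submodule F V // finrank F X = k}) :
      Nat.card {t // spanOf t = X} =
        ∏ i : Fin k, (Fintype.card F ^ k - Fintype.card F ^ (i : ℕ)) := by
    rw [Nat.card_congr ((Equiv.subtypeEquivRight fun t => Subtype.ext_iff).trans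
      (linearIndependentSpanEquiv X.2)), card_linearIndependent X.2.ge, X.2]
  rw [← card_linearIndependent hk, ← Nat.card_congr (Equiv.sigmaFiberEquiv spanOf),
    Nat.card_sigma, Finset.sum_congr rfl fun X _ => card_fiber X]
  simp

theorem card_submodule_finrank_eq (k : ℕ) :
    Nat.card {X : Submodule F V // finrank F X = k} =
      gaussBinom (Fintype.card F) (finrank F V) k := by
  have hq : 1 < Fintype.card F := Fintype.one_lt_card
  rcases lt_or_ge (finrank F V) k with hk | hk
  · rw [gaussBinom_eq_zero_of_lt _ hk, Nat.card_eq_zero]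
    exact .inl ⟨fun X => hk.not_ge (X.2 ▸ Submodule.finrank_le X.1)⟩
  have prod_pos : 0 < ∏ i : Fin k, (Fintype.card F ^ k - Fintype.card F ^ (i : ℕ)) :=
    Finset.prod_pos fun i _ => Nat.sub_pos_of_lt (Nat.pow_lt_pow_right hq i.2)
  have cast_prod {t : ℕ} (ht : k ≤ t) :
      ((∏ i : Fin k, (Fintype.card F ^ t - Fintype.card F ^ (i : ℕ)) : ℕ) : ℤ) =
        ∏ i : Fin k, ((Fintype.card F : ℤ) ^ t - (Fintype.card F : ℤ) ^ (i : ℕ)) := by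
    rw [Nat.cast_prod]
    refine Finset.prod_congr rfl fun i _ => ?_
    rw [Nat.cast_sub (Nat.pow_le_pow_right hq.le (by lia)), Nat.cast_pow, Nat.cast_pow]
  refine Nat.eq_of_mul_eq_mul_right prod_pos ((card_submodule_finrank_eq_mul_prod hk).trans ?_)
  apply Nat.cast_injective (R := ℤ)
  rw [Nat.cast_mul, cast_prod hk, cast_prod le_rfl, gaussBinom_mul_prod]

theorem card_submodule_finrank_eq_and_ge (U : Submodule F V) {s : ℕ} (hs : finrank F U ≤ s) :
    Nat.card {S : Submodule F V // finrank F S = s ∧ U ≤ S} =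
      gaussBinom (Fintype.card F) (finrank F V - finrank F U) (s - finrank F U) := by
  have : Finite (V ⧸ U) := Finite.of_surjective _ U.mkQ_surjective
  rw [← Submodule.finrank_quotient, ← card_submodule_finrank_eq]
  refine Nat.card_congr ((Equiv.subtypeEquivRight fun S => and_comm).trans
    ((Equiv.subtypeSubtypeEquivSubtypeInter (U ≤ ·) (finrank F · = s)).symm.trans
      ((U.comapMkQRelIso.toEquiv.subtypeEquiv fun Z => ?_).symm)))
  change _ ↔ finrank F (Z.comap U.mkQ) = s
  rw [finrank_comap_mkQ]
  lia

theorem card_submodule_finrank_eq_and_mem_Icc {U W : Submodule F V} (h : U ≤ W) {s : ℕ}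
    (hs : finrank F U ≤ s) :
    Nat.card {S : Submodule F V // finrank F S = s ∧ U ≤ S ∧ S ≤ W} =
      gaussBinom (Fintype.card F) (finrank F W - finrank F U) (s - finrank F U) := by
  have hU : finrank F (U.comap W.subtype) = finrank F U :=
    (Submodule.comapSubtypeEquivOfLe h).finrank_eq
  rw [← hU, ← card_submodule_finrank_eq_and_ge _ (hU.trans_le hs)]
  refine Nat.card_congr ((Equiv.subtypeEquivRight fun S => ?_).trans
    ((Equiv.subtypeSubtypeEquivSubtypeInter (· ≤ W) fun S => finrank F S = s ∧ U ≤ S).symm.trans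
      ((Submodule.MapSubtype.orderIso W).toEquiv.subtypeEquiv fun S => ?_).symm))
  · tauto
  · change _ ↔ finrank F (S.map W.subtype) = s ∧ U ≤ S.map W.subtype
    rw [Submodule.finrank_map_subtype_eq,
      ← Submodule.map_le_map_iff_of_injective W.subtype_injective, Submodule.map_comap_subtype,
      inf_eq_right.2 h]

theorem sum_boole_le_mul_boole_le {A : Type*} [Semiring A] {t : ℕ}
    [Fintype {S : Submodule F V // finrank F S = t}] {U : Submodule F V} (W : Submodule F V)
    (hU : finrank F U ≤ t) :
    ∑ S : {S : Submodule F V // finrank F S = t},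
        (if U ≤ S.1 then (1 : A) else 0) * (if S.1 ≤ W then 1 else 0) =
      if U ≤ W then
        (gaussBinom (Fintype.card F) (finrank F W - finrank F U) (t - finrank F U) : A)
      else 0 := by
  have boole_mul (S : Submodule F V) :
      (if U ≤ S then (1 : A) else 0) * (if S ≤ W then 1 else 0) =
        if U ≤ S ∧ S ≤ W then 1 else 0 := by
    simp only [ite_and, boole_mul]
  simp_rw [boole_mul, Finset.sum_boole]
  split_ifs with h
  · rw [← card_submodule_finrank_eq_and_mem_Icc h hU, ← Fintype.card_subtype,
      ← Nat.card_eq_fintype_card]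
    congr 1
    exact Nat.card_congr (Equiv.subtypeSubtypeEquivSubtypeInter
      (fun S : Submodule F V => finrank F S = t) (fun S => U ≤ S ∧ S ≤ W))
  · rw [Finset.filter_false_of_mem fun S _ hS => h (hS.1.trans hS.2), Finset.card_empty,
      Nat.cast_zero]

end Counting

section Dual

variable (k : Type*) {F V : Type*} [CommRing k] [Field F] [AddCommGroup V] [Module F V]

/-- The function on `F` with value `1` at `1`, `-1` at `0` and `0` elsewhere. For `v ≠ 0` its sum
over all values `φ v` of functionals vanishes, so it plays the part of a nontrivial character. -/
noncomputable def oneSubZero (a : F) : k :=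
  (if a = 1 then 1 else 0) - if a = 0 then 1 else 0

@[simp]
theorem oneSubZero_zero : oneSubZero k (0 : F) = -1 := by
  simp [oneSubZero]

@[simp]
theorem oneSubZero_one : oneSubZero k (1 : F) = 1 := by
  simp [oneSubZero]

theorem oneSubZero_of_ne {a : F} (h0 : a ≠ 0) (h1 : a ≠ 1) : oneSubZero k a = 0 := by
  simp [oneSubZero, h0, h1]

theorem exists_dual_apply_eq_one_of_notMem {X : Submodule F V} {v : V} (hv : v ∉ X) :
    ∃ τ : Dual F V, τ v = 1 ∧ ∀ x ∈ X, τ x = 0 := by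
  obtain ⟨g, hgv, hg⟩ := X.exists_le_ker_of_notMem hv
  exact ⟨(g v)⁻¹ • g, inv_mul_cancel₀ hgv, fun x hx => by simp [LinearMap.mem_ker.1 (hg hx)]⟩

variable [Fintype (Dual F V)]

variable {k} in
theorem sum_mul_oneSubZero_eq_zero {w : V} {τ : Dual F V} (hτ : τ w = 1) {f : Dual F V → k}
    (hf : ∀ φ, f (φ + τ) = f φ) : ∑ φ : Dual F V, f φ * oneSubZero k (φ w) = 0 := by
  have shift : ∑ φ : Dual F V, f φ * (if φ w = 1 then 1 else 0) =
      ∑ φ : Dual F V, f φ * (if φ w = 0 then 1 else 0) := by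
    rw [← Equiv.sum_comp (Equiv.addRight τ)]
    simp [hf, hτ]
  simp only [oneSubZero, mul_sub, Finset.sum_sub_distrib, shift, sub_self]

theorem sum_oneSubZero_eq_zero {w : V} (hw : w ≠ 0) :
    ∑ φ : Dual F V, oneSubZero k (φ w) = 0 := by
  obtain ⟨τ, hτ, -⟩ := exists_dual_apply_eq_one_of_notMem (X := (⊥ : Submodule F V)) (by simpa)
  simpa using sum_mul_oneSubZero_eq_zero (f := fun _ => (1 : k)) hτ fun _ => rfl

theorem sum_boole_apply_eq_one_mul_oneSubZero_eq_zero {v w : V} (hw : w ≠ 0) (hwv : w ≠ v) :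
    ∑ φ : Dual F V, (if φ v = 1 then 1 else 0) * oneSubZero k (φ w) = 0 := by
  by_cases hmem : w ∈ Submodule.span F {v}
  · obtain ⟨a, rfl⟩ := Submodule.mem_span_singleton.1 hmem
    have ha0 : a ≠ 0 := fun h => hw (by simp [h])
    have ha1 : a ≠ 1 := fun h => hwv (by simp [h])
    refine Finset.sum_eq_zero fun φ _ => ?_
    by_cases hφ : φ v = 1 <;> simp [hφ, oneSubZero_of_ne k ha0 ha1]
  · obtain ⟨τ, hτ, hv⟩ := exists_dual_apply_eq_one_of_notMem hmem
    exact sum_mul_oneSubZero_eq_zero hτ fun φ => by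
      simp [hv v (Submodule.mem_span_singleton_self v)]

variable [Fintype F]

theorem sum_boole_dual_eqOn (X : Submodule F V) (ψ : Dual F V) :
    ∑ φ : Dual F V, (if ∀ x ∈ X, φ x = ψ x then (1 : k) else 0) =
      (Fintype.card F : k) ^ finrank F X.dualAnnihilator := by
  have shift : ∑ φ : Dual F V, (if ∀ x ∈ X, φ x = ψ x then (1 : k) else 0) =
      ∑ φ : Dual F V, if φ ∈ X.dualAnnihilator then (1 : k) else 0 := by
    rw [← Equiv.sum_comp (Equiv.addRight ψ)]
    simp [Submodule.mem_dualAnnihilator]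
  rw [shift, Finset.sum_boole, ← Fintype.card_subtype, ← Nat.cast_pow,
    ← card_eq_pow_finrank (K := F) (V := X.dualAnnihilator)]

variable {k}

theorem isUnit_sum_boole_dual_apply_eq_one (hq : IsUnit (Fintype.card F : k)) {v : V}
    (hv : v ≠ 0) : IsUnit (∑ φ : Dual F V, if φ v = 1 then (1 : k) else 0) := by
  obtain ⟨ψ, hψ, -⟩ := exists_dual_apply_eq_one_of_notMem (X := (⊥ : Submodule F V)) (by simpa)
  have eqOn_iff (φ : Dual F V) : (∀ x ∈ Submodule.span F {v}, φ x = ψ x) ↔ φ v = 1 := by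
    rw [← hψ]
    simpa [Set.EqOn] using (LinearMap.eqOn_span_iff (f := φ) (g := ψ) (s := {v}))
  have count := sum_boole_dual_eqOn k (Submodule.span F {v}) ψ
  simp_rw [eqOn_iff] at count
  exact count ▸ hq.pow _

theorem isUnit_sum_oneSubZero_zero (hq : IsUnit (Fintype.card F : k)) :
    IsUnit (∑ φ : Dual F V, oneSubZero k (φ 0)) := by
  have count := sum_boole_dual_eqOn k (⊥ : Submodule F V) 0
  simp only [Submodule.mem_bot, forall_eq, map_zero, if_true] at count
  simpa only [map_zero, oneSubZero_zero, Finset.sum_neg_distrib, count] using (hq.pow _).neg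

omit [Fintype (Dual F V)] in
theorem eq_zero_of_forall_sum_mul_oneSubZero_eq_zero [Fintype V]
    (hq : IsUnit (Fintype.card F : k)) {c : V → k}
    (h : ∀ φ : Dual F V, ∑ w, c w * oneSubZero k (φ w) = 0) : c = 0 := by
  have : Finite (Dual F V) := DFunLike.finite _
  have := Fintype.ofFinite (Dual F V)
  have average (f : Dual F V → k) : ∑ w, c w * ∑ φ, f φ * oneSubZero k (φ w) = 0 := by
    simp_rw [Finset.mul_sum, mul_left_comm (c _)]
    rw [Finset.sum_comm]
    simp_rw [← Finset.mul_sum, h, mul_zero, Finset.sum_const_zero]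
  have c_zero : c 0 = 0 := by
    have h0 := average fun _ => 1
    simp only [one_mul] at h0
    rw [Fintype.sum_eq_single 0 fun w hw => by rw [sum_oneSubZero_eq_zero k hw, mul_zero]] at h0
    exact (isUnit_sum_oneSubZero_zero hq).mul_left_eq_zero.1 h0
  funext v
  rcases eq_or_ne v 0 with rfl | hv
  · exact c_zero
  have hv1 := average fun φ => if φ v = 1 then 1 else 0
  rw [Fintype.sum_eq_single v fun w hwv => by
    rcases eq_or_ne w 0 with rfl | hw
    · rw [c_zero, zero_mul]
    · rw [sum_boole_apply_eq_one_mul_oneSubZero_eq_zero k hw hwv, mul_zero]] at hv1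
  have diagonal (φ : Dual F V) : (if φ v = 1 then (1 : k) else 0) * oneSubZero k (φ v) =
      if φ v = 1 then 1 else 0 := by
    split_ifs with hφ <;> simp [hφ]
  simp_rw [diagonal] at hv1
  exact (isUnit_sum_boole_dual_apply_eq_one hq hv).mul_left_eq_zero.1 hv1

end Dual

section InclusionVec

variable (k : Type*) [CommRing k] {F V : Type*} [Field F] [AddCommGroup V] [Module F V]

/-- The row of the inclusion matrix `A_{s,r}` indexed by the subspace `X`, extended by zero from
the `r`-dimensional subspaces to all subspaces, so that rows for different `r` live in one space. -/
noncomputable def inclusionVec (r : ℕ) (X : Submodule F V) : Submodule F V → k :=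
  fun W => if X ≤ W ∧ finrank F W = r then 1 else 0

variable (F V) in
/-- The span of the rows `inclusionVec k r X` of all subspaces `X` of dimension at most `s`. -/
def inclusionSpan (s r : ℕ) : Submodule k (Submodule F V → k) :=
  Submodule.span k (inclusionVec k r '' {X | finrank F X ≤ s})

theorem inclusionVec_mem_inclusionSpan {s : ℕ} (r : ℕ) {X : Submodule F V} (h : finrank F X ≤ s) :
    inclusionVec k r X ∈ inclusionSpan k F V s r :=
  Submodule.subset_span ⟨X, h, rfl⟩

theorem extendByZero_inclusionVec (r : ℕ) (X : Submodule F V) :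
    Function.ExtendByZero.linearMap k Subtype.val
      (fun W : {W : Submodule F V // finrank F W = r} => inclusionVec k r X W) =
        inclusionVec k r X := by
  funext W
  rw [Function.ExtendByZero.linearMap_apply]
  by_cases h : finrank F W = r
  · lift W to {W : Submodule F V // finrank F W = r} using h
    exact Subtype.val_injective.extend_apply _ _ W
  · rw [Function.extend_apply' _ _ _ fun ⟨S, hS⟩ => h (hS ▸ S.2)]
    exact (if_neg fun hW => h hW.2).symm

theorem inclusionVec_self_apply [FiniteDimensional F V] {s : ℕ} {X : Submodule F V}
    (hX : finrank F X = s) (W : Submodule F V) :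
    inclusionVec k s X W = if X = W then 1 else 0 := by
  refine if_congr ⟨fun h => ?_, fun h => ⟨h.le, h ▸ hX⟩⟩ rfl rfl
  exact Submodule.eq_of_le_of_finrank_eq h.1 (hX.trans h.2.symm)

theorem inclusionSpan_self_eq_range [Finite V] (s : ℕ) :
    inclusionSpan k F V s s = LinearMap.range (Function.ExtendByZero.linearMap k
      (Subtype.val : {W : Submodule F V // finrank F W = s} → Submodule F V)) := by
  apply le_antisymm
  · rw [inclusionSpan, Submodule.span_le]
    rintro _ ⟨X, -, rfl⟩
    exact ⟨_, extendByZero_inclusionVec k s X⟩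
  · rw [LinearMap.range_eq_map, ← (Pi.basisFun k _).span_eq, Submodule.map_span,
      Submodule.span_le]
    rintro _ ⟨_, ⟨S, rfl⟩, rfl⟩
    have single_eq : Pi.basisFun k _ S = fun W => inclusionVec k s S.1 W.1 := by
      funext W
      rw [inclusionVec_self_apply k S.2]
      simp [Pi.single_apply, Subtype.ext_iff, eq_comm]
    rw [single_eq, extendByZero_inclusionVec]
    exact inclusionVec_mem_inclusionSpan k _ S.2.le

theorem inclusionVec_comap_mkQ [FiniteDimensional F V] (L : Submodule F V) (t : ℕ)
    (Z Y : Submodule F (V ⧸ L)) :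
    inclusionVec k (t + finrank F L) (Z.comap L.mkQ) (Y.comap L.mkQ) = inclusionVec k t Z Y := by
  simp only [inclusionVec, finrank_comap_mkQ, Nat.add_right_cancel_iff,
    Submodule.comap_le_comap_iff_of_surjective L.mkQ_surjective]

theorem finrank_inclusionSpan_congr {V₂ : Type*} [AddCommGroup V₂] [Module F V₂] (e : V ≃ₗ[F] V₂)
    (s r : ℕ) :
    finrank k (inclusionSpan k F V s r) = finrank k (inclusionSpan k F V₂ s r) := by
  let E : (Submodule F V₂ → k) ≃ₗ[k] (Submodule F V → k) :=
    LinearEquiv.funCongrLeft k k (Submodule.orderIsoMapComap e).toEquiv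
  have map_vec (X : Submodule F V) :
      E (inclusionVec k r (X.map e.toLinearMap)) = inclusionVec k r X := by
    funext W
    change inclusionVec k r (X.map e.toLinearMap) (W.map e.toLinearMap) = _
    simp only [inclusionVec, Submodule.map_le_map_iff_of_injective e.injective,
      LinearEquiv.finrank_map_eq]
  have image_eq : {X : Submodule F V₂ | finrank F X ≤ s} =
      (fun X : Submodule F V => X.map e.toLinearMap) '' {X | finrank F X ≤ s} := by
    ext X
    refine ⟨fun hX => ⟨X.map e.symm.toLinearMap, ?_, ?_⟩, ?_⟩
    · simpa [LinearEquiv.finrank_map_eq] using hX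
    · simp [← Submodule.map_comp]
    · rintro ⟨Y, hY, rfl⟩
      simpa [LinearEquiv.finrank_map_eq] using hY
  have map_span : (inclusionSpan k F V₂ s r).map E.toLinearMap = inclusionSpan k F V s r := by
    simp only [inclusionSpan, Submodule.map_span, image_eq, Set.image_image,
      LinearEquiv.coe_coe, map_vec]
  rw [← map_span, LinearEquiv.finrank_map_eq]

end InclusionVec

section Graph

variable {F V : Type*} [Field F] [AddCommGroup V] [Module F V]

/-- The graph `{(φ x, x) | x ∈ X}` of the restriction of the functional `φ` to `X`, as a subspace
of `F × V`. -/
def graphOn (φ : Dual F V) (X : Submodule F V) : Submodule F (F × V) :=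
  X.map (φ.prod LinearMap.id)

@[simp]
theorem mk_mem_graphOn {φ : Dual F V} {X : Submodule F V} {a : F} {x : V} :
    (a, x) ∈ graphOn φ X ↔ x ∈ X ∧ φ x = a := by
  simp [graphOn]

@[simp]
theorem finrank_graphOn (φ : Dual F V) (X : Submodule F V) :
    finrank F (graphOn φ X) = finrank F X :=
  (Submodule.equivMapOfInjective (φ.prod LinearMap.id)
    (fun _ _ h => congrArg Prod.snd h) X).symm.finrank_eq

theorem map_snd_graphOn (φ : Dual F V) (X : Submodule F V) :
    (graphOn φ X).map (LinearMap.snd F F V) = X := by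
  rw [graphOn, ← Submodule.map_comp, LinearMap.snd_prod, Submodule.map_id]

theorem graphOn_le_graphOn {φ ψ : Dual F V} {X Y : Submodule F V} :
    graphOn φ X ≤ graphOn ψ Y ↔ X ≤ Y ∧ ∀ x ∈ X, φ x = ψ x := by
  rw [graphOn, Submodule.map_le_iff_le_comap]
  simp [SetLike.le_def, imp_and, forall_and, eq_comm]

theorem one_zero_notMem_graphOn (φ : Dual F V) (X : Submodule F V) :
    ((1, 0) : F × V) ∉ graphOn φ X := by
  simp

theorem exists_eq_graphOn_of_notMem {W : Submodule F (F × V)} (hW : ((1, 0) : F × V) ∉ W) :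
    ∃ ψ : Dual F V, W = graphOn ψ (W.map (LinearMap.snd F F V)) := by
  obtain ⟨τ, hτ, hτW⟩ := exists_dual_apply_eq_one_of_notMem hW
  have apply_eq (a : F) (y : V) : τ (a, y) = a + τ (0, y) := by
    have : ((a, y) : F × V) = a • (1, 0) + (0, y) := by simp
    rw [this, map_add, map_smul, hτ, smul_eq_mul, mul_one]
  refine ⟨-(τ ∘ₗ LinearMap.inr F F V), ?_⟩
  ext ⟨a, y⟩
  simp only [mk_mem_graphOn, Submodule.mem_map]
  constructor
  · intro h
    have := hτW _ h
    rw [apply_eq] at this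
    refine ⟨⟨_, h, rfl⟩, ?_⟩
    simp only [LinearMap.neg_apply, LinearMap.comp_apply, LinearMap.inr_apply]
    linear_combination -this
  · rintro ⟨⟨⟨b, y'⟩, h, rfl : y' = y⟩, hy⟩
    have := hτW _ h
    rw [apply_eq] at this
    simp only [LinearMap.neg_apply, LinearMap.comp_apply, LinearMap.inr_apply] at hy
    obtain rfl : a = b := by linear_combination -hy - this
    exact h

theorem graphOn_le_iff_comap_snd_le {W : Submodule F (F × V)} (hW : ((1, 0) : F × V) ∈ W)
    (φ : Dual F V) (X : Submodule F V) :
    graphOn φ X ≤ W ↔ X.comap (LinearMap.snd F F V) ≤ W := by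
  constructor
  · rintro h ⟨a, x⟩ hx
    have : ((a, x) : F × V) = (φ x, x) + (a - φ x) • (1, 0) := by simp
    exact this ▸ W.add_mem (h (by simpa using hx)) (W.smul_mem _ hW)
  · exact fun h => le_trans (fun ⟨a, x⟩ hx => (mk_mem_graphOn.1 hx).1) h

theorem finrank_comap_snd [FiniteDimensional F V] (X : Submodule F V) :
    finrank F (X.comap (LinearMap.snd F F V)) = finrank F X + 1 := by
  rw [finrank_comap_of_surjective LinearMap.snd_surjective, LinearMap.ker_snd,
    LinearMap.finrank_range_of_inj LinearMap.inl_injective, finrank_self]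

end Graph

section Lift

variable {k F V : Type*} [CommRing k] [Field F] [AddCommGroup V] [Module F V]

variable (k F) in
/-- The map carrying functions on the subspaces of `V ⧸ ⟨v⟩` to functions on the subspaces of
`F × V` that vanish on the subspaces containing `(1, 0)`; on the remaining subspaces, which are the
graphs of functionals, it multiplies by `oneSubZero` of the value of the functional at `v`. -/
noncomputable def liftFun (v : V) :
    (Submodule F (V ⧸ Submodule.span F {v}) → k) →ₗ[k] (Submodule F (F × V) → k) where
  toFun u W := if (1, 0) ∈ W then 0 else
    ((if (1, v) ∈ W then 1 else 0) - if (0, v) ∈ W then 1 else 0) *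
      u ((W.map (LinearMap.snd F F V)).map (Submodule.span F {v}).mkQ)
  map_add' u u' := by
    funext W
    simp only [Pi.add_apply]
    split_ifs <;> ring
  map_smul' c u := by
    funext W
    simp only [Pi.smul_apply, smul_eq_mul, RingHom.id_apply]
    split_ifs <;> ring

theorem liftFun_apply_of_mem (v : V) (u : Submodule F (V ⧸ Submodule.span F {v}) → k)
    {W : Submodule F (F × V)} (hW : (1, 0) ∈ W) : liftFun k F v u W = 0 :=
  if_pos hW

theorem liftFun_apply_graphOn (v : V) (u : Submodule F (V ⧸ Submodule.span F {v}) → k)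
    (ψ : Dual F V) (Y : Submodule F V) :
    liftFun k F v u (graphOn ψ Y) =
      if v ∈ Y then oneSubZero k (ψ v) * u (Y.map (Submodule.span F {v}).mkQ) else 0 := by
  simp only [liftFun, LinearMap.coe_mk, AddHom.coe_mk, one_zero_notMem_graphOn, map_snd_graphOn]
  by_cases hv : v ∈ Y <;> simp [hv, oneSubZero]

theorem liftFun_inclusionVec_apply_graphOn [FiniteDimensional F V] (v : V) (t : ℕ)
    (Z : Submodule F (V ⧸ Submodule.span F {v})) (ψ : Dual F V) (Y : Submodule F V) :
    liftFun k F v (inclusionVec k t Z) (graphOn ψ Y) = oneSubZero k (ψ v) *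
      inclusionVec k (t + finrank F (Submodule.span F {v}))
        (Z.comap (Submodule.span F {v}).mkQ) Y := by
  rw [liftFun_apply_graphOn]
  split_ifs with hv
  · have hL : Submodule.span F {v} ≤ Y := by simpa
    rw [← inclusionVec_comap_mkQ, Submodule.comap_map_mkQ, sup_eq_right.2 hL]
  · have : ¬ Z.comap (Submodule.span F {v}).mkQ ≤ Y := fun h =>
      hv (h (Submodule.le_comap_mkQ _ Z (Submodule.mem_span_singleton_self v)))
    simp [inclusionVec, this]

variable [Fintype F] [Fintype (Dual F V)]

theorem sum_mul_inclusionVec_graphOn_apply_graphOn {f : F → k} {v : V} (r : ℕ)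
    {X : Submodule F V} (hv : v ∈ X) (ψ : Dual F V) (Y : Submodule F V) :
    ∑ φ : Dual F V, f (φ v) * inclusionVec k r (graphOn φ X) (graphOn ψ Y) =
      (Fintype.card F : k) ^ finrank F X.dualAnnihilator * (f (ψ v) * inclusionVec k r X Y) := by
  rw [← sum_boole_dual_eqOn k X ψ, Finset.sum_mul]
  refine Finset.sum_congr rfl fun φ _ => ?_
  by_cases h : ∀ x ∈ X, φ x = ψ x
  · simp [inclusionVec, graphOn_le_graphOn, h v hv, if_pos h, and_iff_left h]
  · simp [inclusionVec, graphOn_le_graphOn, h]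

theorem card_pow_smul_liftFun_inclusionVec [FiniteDimensional F V] (v : V) (t : ℕ)
    (Z : Submodule F (V ⧸ Submodule.span F {v})) {r : ℕ} {X : Submodule F V}
    (hr : r = t + finrank F (Submodule.span F {v})) (hX : X = Z.comap (Submodule.span F {v}).mkQ) :
    (Fintype.card F : k) ^ finrank F X.dualAnnihilator • liftFun k F v (inclusionVec k t Z) =
      ∑ φ : Dual F V, oneSubZero k (φ v) • inclusionVec k r (graphOn φ X) -
        (∑ φ : Dual F V, oneSubZero k (φ v)) •
          inclusionVec k r (X.comap (LinearMap.snd F F V)) := by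
  funext W
  simp only [Pi.sub_apply, Finset.sum_apply, Pi.smul_apply, smul_eq_mul]
  by_cases hW : (1, 0) ∈ W
  · simp [liftFun_apply_of_mem v _ hW, inclusionVec, graphOn_le_iff_comap_snd_le hW]
  · obtain ⟨ψ, hψ⟩ := exists_eq_graphOn_of_notMem hW
    have comap_vanishes : inclusionVec k r (X.comap (LinearMap.snd F F V)) W = 0 :=
      if_neg fun h => hW (h.1 (by simp))
    have hv : v ∈ X := hX ▸ Submodule.le_comap_mkQ _ Z (Submodule.mem_span_singleton_self v)
    rw [hψ, liftFun_inclusionVec_apply_graphOn, ← hr, ← hX,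
      ← sum_mul_inclusionVec_graphOn_apply_graphOn r hv, ← hψ,
      comap_vanishes, mul_zero, sub_zero]

omit [Fintype (Dual F V)] in
theorem liftFun_inclusionVec_mem_inclusionSpan [Finite V]
    (hq : IsUnit (Fintype.card F : k)) (v : V) {s : ℕ} (t : ℕ)
    {Z : Submodule F (V ⧸ Submodule.span F {v})} (hZ : finrank F Z ≤ s) :
    liftFun k F v (inclusionVec k t Z) ∈
      inclusionSpan k F (F × V) (s + 1) (t + finrank F (Submodule.span F {v})) := by
  have : Finite (Dual F V) := DFunLike.finite _
  have := Fintype.ofFinite (Dual F V)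
  have hX := finrank_comap_mkQ _ Z
  set X := Z.comap (Submodule.span F {v}).mkQ with hXdef
  rw [← Submodule.smul_mem_iff_of_isUnit _ (hq.pow (finrank F X.dualAnnihilator)),
    card_pow_smul_liftFun_inclusionVec v t Z rfl hXdef]
  refine Submodule.sub_mem _ (Submodule.sum_mem _ fun φ _ => Submodule.smul_mem _ _
    (inclusionVec_mem_inclusionSpan k _ ?_)) ?_
  · have hL := finrank_span_singleton_le_one (F := F) v
    rw [finrank_graphOn]
    lia
  · rcases eq_or_ne v 0 with rfl | hv
    · refine Submodule.smul_mem _ _ (inclusionVec_mem_inclusionSpan k _ ?_)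
      have hL : finrank F (Submodule.span F {(0 : V)}) = 0 := by simp
      rw [finrank_comap_snd]
      lia
    · simp [sum_oneSubZero_eq_zero k hv]

omit [Fintype (Dual F V)] in
theorem liftFun_mem_inclusionSpan [Finite V] (hq : IsUnit (Fintype.card F : k))
    (v : V) {s t : ℕ} {u : Submodule F (V ⧸ Submodule.span F {v}) → k}
    (hu : u ∈ inclusionSpan k F (V ⧸ Submodule.span F {v}) s t) :
    liftFun k F v u ∈ inclusionSpan k F (F × V) (s + 1) (t + finrank F (Submodule.span F {v})) := by
  suffices inclusionSpan k F (V ⧸ Submodule.span F {v}) s t ≤ (inclusionSpan k F (F × V) (s + 1)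
      (t + finrank F (Submodule.span F {v}))).comap (liftFun k F v) from this hu
  rw [inclusionSpan, Submodule.span_le]
  rintro _ ⟨Z, hZ, rfl⟩
  exact liftFun_inclusionVec_mem_inclusionSpan hq v t hZ

end Lift

section RankStep

variable {k F V : Type*} [CommRing k] [Field F] [AddCommGroup V] [Module F V]

theorem funLeft_comap_snd_liftFun (v : V) (u : Submodule F (V ⧸ Submodule.span F {v}) → k) :
    LinearMap.funLeft k k (Submodule.comap (LinearMap.snd F F V)) (liftFun k F v u) = 0 := by
  funext Y
  exact liftFun_apply_of_mem v u (by simp)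

theorem inclusionSpan_le_map_funLeft_comap_snd [FiniteDimensional F V] (s r : ℕ) :
    inclusionSpan k F V s r ≤ (inclusionSpan k F (F × V) s (r + 1)).map
      (LinearMap.funLeft k k (Submodule.comap (LinearMap.snd F F V))) := by
  rw [inclusionSpan, Submodule.span_le]
  rintro _ ⟨X, hX, rfl⟩
  refine ⟨inclusionVec k (r + 1) (X.map (LinearMap.inr F F V)),
    inclusionVec_mem_inclusionSpan k _ ((Submodule.finrank_map_le _ _).trans hX), ?_⟩
  funext Y
  simp only [LinearMap.funLeft_apply, inclusionVec, finrank_comap_snd, Nat.add_right_cancel_iff,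
    Submodule.map_le_iff_le_comap, ← Submodule.comap_comp, LinearMap.snd_comp_inr,
    Submodule.comap_id]

theorem injective_lsum_liftFun [Fintype F] [Fintype V] (hq : IsUnit (Fintype.card F : k)) :
    Function.Injective (LinearMap.lsum k
      (fun v : V => Submodule F (V ⧸ Submodule.span F {v}) → k) k (liftFun k F)) := by
  rw [injective_iff_map_eq_zero]
  intro c hc
  have slice_eq_zero (Y : Submodule F V) :
      (fun v => if v ∈ Y then c v (Y.map (Submodule.span F {v}).mkQ) else 0) = 0 := by
    refine eq_zero_of_forall_sum_mul_oneSubZero_eq_zero hq fun φ => ?_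
    have := congrFun hc (graphOn φ Y)
    rw [LinearMap.lsum_apply] at this
    simpa [liftFun_apply_graphOn, mul_comm] using this
  funext v Z
  have hv : v ∈ Z.comap (Submodule.span F {v}).mkQ :=
    Submodule.le_comap_mkQ _ Z (Submodule.mem_span_singleton_self v)
  have := congrFun (slice_eq_zero (Z.comap (Submodule.span F {v}).mkQ)) v
  rwa [if_pos hv, Submodule.map_comap_eq_of_surjective (Submodule.mkQ_surjective _)] at this

end RankStep

section RankBound

variable {k F V : Type*} [Field k] [Field F] [AddCommGroup V] [Module F V]

theorem one_le_finrank_inclusionSpan_zero [Finite V] {r : ℕ} (hr : r ≤ finrank F V) :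
    1 ≤ finrank k (inclusionSpan k F V 0 r) := by
  obtain ⟨W, hW⟩ := exists_submodule_finrank_eq hr
  refine Submodule.one_le_finrank_iff.2 fun h => ?_
  have := inclusionVec_mem_inclusionSpan k r (X := (⊥ : Submodule F V)) (s := 0) (by simp)
  rw [h, Submodule.mem_bot] at this
  simpa [inclusionVec, hW] using congrFun this W

variable [Fintype F]

theorem finrank_inclusionSpan_self [Finite V] (s : ℕ) :
    finrank k (inclusionSpan k F V s s) = gaussBinom (Fintype.card F) (finrank F V) s := by
  have := Fintype.ofFinite {W : Submodule F V // finrank F W = s}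
  rw [inclusionSpan_self_eq_range, LinearMap.finrank_range_of_inj
    (Function.extend_injective Subtype.val_injective (0 : Submodule F V → k)),
    finrank_fintype_fun_eq_card, ← card_submodule_finrank_eq, Nat.card_eq_fintype_card]

theorem finrank_inclusionSpan_add_sum_le [Fintype V] (hq : (Fintype.card F : k) ≠ 0)
    (s r : ℕ) :
    finrank k (inclusionSpan k F V (s + 1) r) +
        ∑ v : V, finrank k (inclusionSpan k F (V ⧸ Submodule.span F {v}) s
          (r + 1 - finrank F (Submodule.span F {v}))) ≤
      finrank k (inclusionSpan k F (F × V) (s + 1) (r + 1)) := by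
  let t (v : V) := r + 1 - finrank F (Submodule.span F {v})
  let ρ := LinearMap.funLeft k k (Submodule.comap (LinearMap.snd F F V))
  let Ψ := LinearMap.lsum k (fun v : V => Submodule F (V ⧸ Submodule.span F {v}) → k) k
      (liftFun k F) ∘ₗ LinearMap.piMap fun v : V =>
    (inclusionSpan k F (V ⧸ Submodule.span F {v}) s (t v)).subtype
  have Ψ_injective : Function.Injective Ψ :=
    (injective_lsum_liftFun hq.isUnit).comp
      (Function.Injective.piMap fun v => Submodule.subtype_injective _)
  have Ψ_apply (c) : Ψ c = ∑ v, liftFun k F v (c v) := by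
    simp [Ψ, LinearMap.lsum_apply]
  have lift_mem (v : V) {u} (hu : u ∈ inclusionSpan k F (V ⧸ Submodule.span F {v}) s (t v)) :
      liftFun k F v u ∈ inclusionSpan k F (F × V) (s + 1) (r + 1) := by
    have hδ := finrank_span_singleton_le_one (F := F) v
    have := liftFun_mem_inclusionSpan hq.isUnit v hu
    rwa [Nat.sub_add_cancel (by lia)] at this
  have range_le : LinearMap.range Ψ ≤
      inclusionSpan k F (F × V) (s + 1) (r + 1) ⊓ LinearMap.ker ρ := by
    rintro _ ⟨c, rfl⟩
    rw [Ψ_apply]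
    exact Submodule.sum_mem _ fun v _ =>
      ⟨lift_mem v (c v).2, funLeft_comap_snd_liftFun v _⟩
  calc
    _ ≤ finrank k ((inclusionSpan k F (F × V) (s + 1) (r + 1)).map ρ) +
          finrank k (LinearMap.range Ψ) := by
      rw [LinearMap.finrank_range_of_inj Ψ_injective, finrank_pi_fintype]
      gcongr
      exact Submodule.finrank_mono (inclusionSpan_le_map_funLeft_comap_snd (s + 1) r)
    _ ≤ _ := by
      rw [← finrank_map_add_finrank_inf_ker ρ (inclusionSpan k F (F × V) (s + 1) (r + 1))]
      gcongr
      exact Submodule.finrank_mono range_le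

theorem sum_gaussBinom_sub_finrank_span_singleton [Fintype V] {m : ℕ}
    (hm : finrank F V = m + 1) (s : ℕ) :
    ∑ v : V, gaussBinom (Fintype.card F) (m + 1 - finrank F (Submodule.span F {v})) s =
      gaussBinom (Fintype.card F) (m + 1) s +
        (Fintype.card F ^ (m + 1) - 1) * gaussBinom (Fintype.card F) m s := by
  have card_ne_zero : (Finset.univ.erase (0 : V)).card = Fintype.card F ^ (m + 1) - 1 := by
    rw [Finset.card_erase_of_mem (Finset.mem_univ _), Finset.card_univ,
      card_eq_pow_finrank (K := F), hm]
  rw [← Finset.add_sum_erase _ _ (Finset.mem_univ 0), Finset.sum_congr rfl fun v hv => by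
    rw [finrank_span_singleton (Finset.ne_of_mem_erase hv), Nat.add_sub_cancel],
    Finset.sum_const, card_ne_zero, smul_eq_mul, Submodule.span_zero_singleton, finrank_bot,
    Nat.sub_zero]

theorem gaussBinom_le_finrank_inclusionSpan_fin (hq : (Fintype.card F : k) ≠ 0) (m : ℕ) :
    ∀ {s r : ℕ}, s ≤ r → s + r ≤ m →
      gaussBinom (Fintype.card F) m s ≤ finrank k (inclusionSpan k F (Fin m → F) s r) := by
  induction m using Nat.strong_induction_on with
  | h m ih =>
  intro s r hsr hrm
  rcases s with _ | s
  · rw [gaussBinom_zero_right]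
    exact one_le_finrank_inclusionSpan_zero (by rw [finrank_fin_fun]; lia)
  rcases hsr.eq_or_lt with rfl | hlt
  · rw [finrank_inclusionSpan_self, finrank_fin_fun]
  obtain ⟨r, rfl⟩ : ∃ t, r = t + 1 := ⟨r - 1, by lia⟩
  obtain ⟨m, rfl⟩ : ∃ t, m = t + 2 := ⟨m - 2, by lia⟩
  have := Fintype.ofFinite (Fin (m + 1) → F)
  have hV : finrank F (Fin (m + 1) → F) = m + 1 := finrank_fin_fun F
  have quotient_le (v : Fin (m + 1) → F) :
      gaussBinom (Fintype.card F) (m + 1 - finrank F (Submodule.span F {v})) s ≤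
        finrank k (inclusionSpan k F ((Fin (m + 1) → F) ⧸ Submodule.span F {v}) s
          (r + 1 - finrank F (Submodule.span F {v}))) := by
    have hδ := finrank_span_singleton_le_one (F := F) v
    let e : ((Fin (m + 1) → F) ⧸ Submodule.span F {v}) ≃ₗ[F]
        (Fin (m + 1 - finrank F (Submodule.span F {v})) → F) :=
      LinearEquiv.ofFinrankEq _ _ (by rw [Submodule.finrank_quotient, hV, finrank_fin_fun])
    rw [finrank_inclusionSpan_congr k e]
    exact ih _ (by lia) (by lia) (by lia)
  let e : (F × (Fin (m + 1) → F)) ≃ₗ[F] (Fin (m + 2) → F) :=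
    LinearEquiv.ofFinrankEq _ _ (by rw [finrank_prod, finrank_self, hV, finrank_fin_fun]; lia)
  rw [← finrank_inclusionSpan_congr k e, gaussBinom_add_two_succ _ Fintype.card_pos, add_assoc,
    ← sum_gaussBinom_sub_finrank_span_singleton hV s]
  exact (add_le_add (ih _ (by lia) (by lia) (by lia))
    (Finset.sum_le_sum fun v _ => quotient_le v)).trans (finrank_inclusionSpan_add_sum_le hq s r)

theorem gaussBinom_le_finrank_inclusionSpan [FiniteDimensional F V]
    (hq : (Fintype.card F : k) ≠ 0) {s r : ℕ} (hsr : s ≤ r) (hr : s + r ≤ finrank F V) :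
    gaussBinom (Fintype.card F) (finrank F V) s ≤ finrank k (inclusionSpan k F V s r) := by
  rw [finrank_inclusionSpan_congr k (finBasis F V).equivFun]
  exact gaussBinom_le_finrank_inclusionSpan_fin hq _ hsr hr

end RankBound

section InclusionMul

variable {k F V : Type*} [CommRing k] [Field F] [AddCommGroup V] [Module F V]

variable (k) in
/-- Multiplication of row vectors by the inclusion matrix `A_{t,r}`, extended by zero. -/
noncomputable def inclusionMul (t r : ℕ) [Fintype {S : Submodule F V // finrank F S = t}] :
    (Submodule F V → k) →ₗ[k] (Submodule F V → k) :=
  ∑ S : {S : Submodule F V // finrank F S = t},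
    (LinearMap.proj S.1).smulRight (inclusionVec k r S.1)

theorem inclusionMul_apply (t r : ℕ) [Fintype {S : Submodule F V // finrank F S = t}]
    (u : Submodule F V → k) (W : Submodule F V) :
    inclusionMul k t r u W =
      ∑ S : {S : Submodule F V // finrank F S = t}, u S * inclusionVec k r S.1 W := by
  simp [inclusionMul]

theorem inclusionMul_inclusionVec [Fintype F] [Finite V] {t : ℕ} (r : ℕ)
    [Fintype {S : Submodule F V // finrank F S = t}] {U : Submodule F V} (hU : finrank F U ≤ t) :
    inclusionMul k t r (inclusionVec k t U) =
      (gaussBinom (Fintype.card F) (r - finrank F U) (t - finrank F U) : k) •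
        inclusionVec k r U := by
  funext W
  simp only [inclusionMul_apply, inclusionVec, Pi.smul_apply, smul_eq_mul]
  by_cases hW : finrank F W = r
  · subst hW
    simpa [fun S : {S : Submodule F V // finrank F S = t} => S.2] using
      sum_boole_le_mul_boole_le (A := k) W hU
  · simp [hW]

end InclusionMul

section InclusionBasis

variable (k : Type*) {F V : Type*} [Field k] [Field F] [AddCommGroup V] [Module F V]

/-- A family `B` of subspaces of dimension at most `s` whose members of dimension at most `i` give,
for each `i ≤ s`, a basis of the span of the rows of all `A_{j,i}` with `j ≤ i`. -/
structure IsInclusionBasis (s : ℕ) (B : Finset (Submodule F V)) : Prop where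
  finrank_le : ∀ X ∈ B, finrank F X ≤ s
  linearIndepOn : ∀ i ≤ s, LinearIndepOn k (inclusionVec k i) {X | X ∈ B ∧ finrank F X ≤ i}
  inclusionSpan_le : ∀ i ≤ s,
    inclusionSpan k F V i i ≤ Submodule.span k (inclusionVec k i '' {X | X ∈ B ∧ finrank F X ≤ i})

variable {k} {s : ℕ} {B : Finset (Submodule F V)}

theorem isInclusionBasis_singleton_bot [FiniteDimensional F V] :
    IsInclusionBasis k 0 ({⊥} : Finset (Submodule F V)) where
  finrank_le := by simp
  linearIndepOn i hi := by
    obtain rfl := Nat.le_zero.1 hi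
    have : {X : Submodule F V | X ∈ ({⊥} : Finset (Submodule F V)) ∧ finrank F X ≤ 0} = {⊥} := by
      ext; simp
    rw [this, linearIndepOn_singleton_iff]
    exact fun h => by simpa [inclusionVec] using congrFun h ⊥
  inclusionSpan_le i hi := by
    obtain rfl := Nat.le_zero.1 hi
    simp [inclusionSpan]

variable [Fintype F] [Finite V]

theorem IsInclusionBasis.card_filter_finrank_le (hB : IsInclusionBasis k s B) {i : ℕ} (hi : i ≤ s) :
    (B.filter fun X : Submodule F V => finrank F X ≤ i).card =
      gaussBinom (Fintype.card F) (finrank F V) i := by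
  have span_eq : Submodule.span k (inclusionVec k i '' {X | X ∈ B ∧ finrank F X ≤ i}) =
      inclusionSpan k F V i i :=
    le_antisymm (Submodule.span_mono (Set.image_mono fun X hX => hX.2)) (hB.inclusionSpan_le i hi)
  rw [← finrank_inclusionSpan_self (k := k), ← span_eq, Set.image_eq_range,
    finrank_span_eq_card (hB.linearIndepOn i hi)]
  simp

theorem IsInclusionBasis.card_eq (hB : IsInclusionBasis k s B) :
    B.card = gaussBinom (Fintype.card F) (finrank F V) s := by
  rw [← hB.card_filter_finrank_le le_rfl, Finset.filter_true_of_mem hB.finrank_le]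

theorem IsInclusionBasis.card_filter_finrank_eq (hB : IsInclusionBasis k s B) {i : ℕ} (hi : i ≤ s) :
    (B.filter fun X : Submodule F V => finrank F X = i).card = if i = 0 then 1 else
      gaussBinom (Fintype.card F) (finrank F V) i -
        gaussBinom (Fintype.card F) (finrank F V) (i - 1) := by
  cases i with
  | zero => simpa using hB.card_filter_finrank_le (Nat.zero_le s)
  | succ i =>
    let dimLE : Finset (Submodule F V) := B.filter fun X : Submodule F V => finrank F X ≤ i
    let dimEq : Finset (Submodule F V) := B.filter fun X : Submodule F V => finrank F X = i + 1
    have filter_le_succ : (B.filter fun X : Submodule F V => finrank F X ≤ i + 1) =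
        dimLE ∪ dimEq := by
      simp only [dimLE, dimEq, ← Finset.filter_or, Nat.le_succ_iff, Nat.succ_eq_add_one]
    have disjoint : Disjoint dimLE dimEq :=
      Finset.disjoint_filter.2 fun _ _ _ _ => by lia
    have card_union := hB.card_filter_finrank_le hi
    rw [filter_le_succ, Finset.card_union_of_disjoint disjoint,
      hB.card_filter_finrank_le (by lia)] at card_union
    rw [if_neg i.succ_ne_zero, Nat.succ_sub_one, ← card_union, Nat.add_sub_cancel_left]

omit [Fintype F] in
theorem IsInclusionBasis.inclusionSpan_le_span_image [Finite F] (hB : IsInclusionBasis k s B)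
    (r : ℕ) : inclusionSpan k F V s r ≤ Submodule.span k (inclusionVec k r '' B) := by
  have := Fintype.ofFinite F
  rw [inclusionSpan, Submodule.span_le]
  rintro _ ⟨X, hX, rfl⟩
  have := Fintype.ofFinite {S : Submodule F V // finrank F S = finrank F X}
  have map_le : (inclusionSpan k F V (finrank F X) (finrank F X)).map
      (inclusionMul k (finrank F X) r) ≤ Submodule.span k (inclusionVec k r '' B) := by
    refine (Submodule.map_mono (hB.inclusionSpan_le _ hX)).trans ?_
    rw [Submodule.map_span, Submodule.span_le]
    rintro _ ⟨_, ⟨U, hU, rfl⟩, rfl⟩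
    rw [inclusionMul_inclusionVec r hU.2]
    exact Submodule.smul_mem _ _ (Submodule.subset_span ⟨U, hU.1, rfl⟩)
  have := map_le ⟨_, inclusionVec_mem_inclusionSpan k (finrank F X) le_rfl, rfl⟩
  simpa [inclusionMul_inclusionVec] using this

theorem IsInclusionBasis.linearIndepOn_inclusionVec (hB : IsInclusionBasis k s B)
    (hq : (Fintype.card F : k) ≠ 0) {r : ℕ} (hsr : s ≤ r) (hr : s + r ≤ finrank F V) :
    LinearIndepOn k (inclusionVec k r) (B : Set (Submodule F V)) := by
  refine linearIndependent_iff_card_le_finrank_span.2 ?_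
  rw [← Set.image_eq_range]
  simp only [Finset.coe_sort_coe, Fintype.card_coe, hB.card_eq]
  exact (gaussBinom_le_finrank_inclusionSpan hq hsr hr).trans
    (Submodule.finrank_mono (hB.inclusionSpan_le_span_image r))

theorem IsInclusionBasis.exists_succ (hB : IsInclusionBasis k s B) (hq : (Fintype.card F : k) ≠ 0)
    (hs : s + (s + 1) ≤ finrank F V) :
    ∃ B' : Finset (Submodule F V), IsInclusionBasis k (s + 1) B' := by
  have hli := hB.linearIndepOn_inclusionVec hq s.le_succ hs
  let T : Set (Submodule F V) := B ∪ {X | finrank F X = s + 1}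
  obtain ⟨B', hB'T, hBB', hT, hB'⟩ :=
    exists_linearIndepOn_extension hli (Set.subset_union_left : ↑B ⊆ T)
  have finrank_le : ∀ X ∈ B', finrank F X ≤ s + 1 := fun X hX =>
    (hB'T hX).elim (fun h => (hB.finrank_le X h).trans s.le_succ) Eq.le
  lift B' to Finset (Submodule F V) using B'.toFinite
  have eq_of_le {i : ℕ} (hi : i ≤ s) :
      {X | X ∈ B' ∧ finrank F X ≤ i} = {X | X ∈ B ∧ finrank F X ≤ i} := by
    ext X
    refine and_congr_left fun hX => ⟨fun h => (hB'T h).resolve_right fun hX' => ?_, @hBB' X⟩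
    exact absurd (hX'.symm.trans_le hX) (by lia)
  have eq_succ : {X | X ∈ B' ∧ finrank F X ≤ s + 1} = ↑B' :=
    Set.ext fun X => and_iff_left_of_imp (finrank_le X)
  refine ⟨B', finrank_le, fun i hi => ?_,
    fun i hi => ?_⟩
  · rcases Nat.le_succ_iff.1 hi with hi | rfl
    · exact eq_of_le hi ▸ hB.linearIndepOn i hi
    · exact eq_succ ▸ hB'
  · rcases Nat.le_succ_iff.1 hi with hi | rfl
    · exact eq_of_le hi ▸ hB.inclusionSpan_le i hi
    · rw [eq_succ, inclusionSpan, Submodule.span_le]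
      rintro _ ⟨X, hX, rfl⟩
      rcases Nat.le_succ_iff.1 hX with hX | hX
      · exact Submodule.span_mono (Set.image_mono hBB')
          (hB.inclusionSpan_le_span_image _ (inclusionVec_mem_inclusionSpan k _ hX))
      · exact hT ⟨X, .inr hX, rfl⟩

theorem exists_isInclusionBasis (hq : (Fintype.card F : k) ≠ 0) {s : ℕ} (hs : s + s ≤ finrank F V) :
    ∃ B : Finset (Submodule F V), IsInclusionBasis k s B := by
  induction s with
  | zero => exact ⟨_, isInclusionBasis_singleton_bot⟩
  | succ s ih =>
    obtain ⟨B, hB⟩ := ih (by lia)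
    exact hB.exists_succ hq (by lia)

end InclusionBasis

section LocalRing

open IsLocalRing

theorem exists_basis_apply_embedding_eq {K W ι κ : Type*} [DivisionRing K] [AddCommGroup W]
    [Module K W] (b₀ : Basis κ K W) {v : ι → W} (hv : LinearIndependent K v) :
    ∃ (b : Basis κ K W) (σ : ι ↪ κ), ∀ i, b (σ i) = v i := by
  let e := (Basis.sumExtend hv).indexEquiv b₀
  refine ⟨(Basis.sumExtend hv).reindex e, Function.Embedding.inl.trans e.toEmbedding, fun i => ?_⟩
  simp only [Function.Embedding.trans_apply, Equiv.coe_toEmbedding, Basis.reindex_apply,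
    Equiv.symm_apply_apply, Basis.sumExtend, Basis.extend_apply_self]
  rfl

variable {O ι κ : Type*} [CommRing O] [IsLocalRing O] [Fintype κ] [DecidableEq κ]

theorem isUnit_det_of_linearIndependent_residue {N : Matrix κ κ O}
    (h : LinearIndependent (ResidueField O) (N.map (residue O)).row) : IsUnit N.det := by
  rw [Matrix.linearIndependent_rows_iff_isUnit, Matrix.isUnit_iff_isUnit_det,
    ← RingHom.mapMatrix_apply, ← RingHom.map_det] at h
  exact isUnit_of_map_unit _ _ h

theorem exists_isUnit_det_row_embedding_eq {M : Matrix ι κ O}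
    (h : LinearIndependent (ResidueField O) (M.map (residue O)).row) :
    ∃ (N : Matrix κ κ O) (σ : ι ↪ κ), IsUnit N.det ∧ ∀ i, N (σ i) = M i := by
  obtain ⟨b, σ, hb⟩ := exists_basis_apply_embedding_eq (Pi.basisFun (ResidueField O) κ) h
  let N : Matrix κ κ O := Function.extend σ M fun j => Function.surjInv residue_surjective ∘ b j
  have row_of_mem (i : ι) : N (σ i) = M i := σ.injective.extend_apply M _ i
  have map_row : (N.map (residue O)).row = b := by
    funext j l
    change residue O (N j l) = b j l
    by_cases hj : ∃ i, σ i = j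
    · obtain ⟨i, rfl⟩ := hj
      rw [hb, row_of_mem]
      rfl
    · have row_of_notMem : N j = Function.surjInv residue_surjective ∘ b j :=
        Function.extend_apply' _ _ _ hj
      rw [row_of_notMem]
      exact Function.surjInv_eq _ _
  exact ⟨N, σ, isUnit_det_of_linearIndependent_residue (map_row ▸ b.linearIndependent),
    row_of_mem⟩

theorem exists_diagonal_form_of_mul_eq_diagonal_mul [Fintype ι] [DecidableEq ι]
    {P : Matrix ι ι O} {A M : Matrix ι κ O} {d : ι → O}
    (hP : LinearIndependent (ResidueField O) (P.map (residue O)).row)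
    (hM : LinearIndependent (ResidueField O) (M.map (residue O)).row)
    (h : P * A = Matrix.diagonal d * M) :
    ∃ (Q : Matrix κ κ O) (σ : ι ↪ κ), IsUnit P.det ∧ IsUnit Q.det ∧
      P * A * Q = Matrix.of fun i j => if j = σ i then d i else 0 := by
  obtain ⟨N, σ, hN, hσ⟩ := exists_isUnit_det_row_embedding_eq hM
  refine ⟨N⁻¹, σ, isUnit_det_of_linearIndependent_residue hP, N.isUnit_nonsing_inv_det hN, ?_⟩
  have row_mul_inv (i : ι) (j : κ) : (M * N⁻¹) i j = if j = σ i then 1 else 0 := by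
    have : (M * N⁻¹) i j = (N * N⁻¹) (σ i) j := by simp only [Matrix.mul_apply, hσ]
    rw [this, Matrix.mul_nonsing_inv _ hN, Matrix.one_apply]
    simp only [eq_comm]
  ext i j
  rw [h, Matrix.mul_assoc, Matrix.diagonal_mul, row_mul_inv]
  simp

end LocalRing

section DiagonalForm

open IsLocalRing

theorem map_val_eq_bind_replicate_card_fiber {α β : Type*} {B : Finset α} {f : α → ℕ} {s : ℕ}
    (hf : ∀ x ∈ B, f x ≤ s) (g : ℕ → β) :
    B.val.map (fun x => g (f x)) =
      (Finset.range (s + 1)).val.bind fun i =>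
        Multiset.replicate (B.filter (f · = i)).card (g i) := by
  have maps_to : ∀ x ∈ B, f x ∈ Finset.range (s + 1) := fun x hx =>
    Finset.mem_range_succ_iff.2 (hf x hx)
  have sum_fiber (i : ℕ) : ∑ x ∈ B with f x = i, ({g (f x)} : Multiset β) =
      Multiset.replicate (B.filter (f · = i)).card (g i) := by
    rw [← Multiset.nsmul_singleton, ← Finset.sum_const]
    exact Finset.sum_congr rfl fun x hx => by rw [(Finset.mem_filter.1 hx).2]
  calc B.val.map (fun x => g (f x)) = ∑ x ∈ B, {g (f x)} :=
        (Multiset.sum_map_singleton _).symm.trans (by rw [Multiset.map_map]; rfl)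
    _ = ∑ i ∈ Finset.range (s + 1), ∑ x ∈ B with f x = i, {g (f x)} :=
        (Finset.sum_fiberwise_of_maps_to maps_to _).symm
    _ = ∑ i ∈ Finset.range (s + 1), Multiset.replicate (B.filter (f · = i)).card (g i) :=
        Finset.sum_congr rfl fun i _ => sum_fiber i

section InclusionMatrix

variable (k : Type*) {F V ι : Type*} [CommRing k] [Field F] [AddCommGroup V] [Module F V]

/-- The inclusion matrix of a family `X` of subspaces in the `r`-dimensional subspaces; it is
`A_{s,r}` when `X` runs over all `s`-dimensional subspaces. -/
noncomputable def inclusionMatrix (r : ℕ) (X : ι → Submodule F V) :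
    Matrix ι {W : Submodule F V // finrank F W = r} k :=
  Matrix.of fun i W => if X i ≤ W.1 then 1 else 0

theorem inclusionVec_apply_coe {r : ℕ} (X : ι → Submodule F V) (i : ι)
    (W : {W : Submodule F V // finrank F W = r}) :
    inclusionVec k r (X i) W.1 = inclusionMatrix k r X i W := by
  simp [inclusionVec, inclusionMatrix, W.2]

theorem map_inclusionMatrix {k' : Type*} [CommRing k'] (f : k →+* k') (r : ℕ)
    (X : ι → Submodule F V) : (inclusionMatrix k r X).map f = inclusionMatrix k' r X := by
  ext i W
  simp [inclusionMatrix, apply_ite f]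

theorem inclusionMatrix_mul [Fintype F] [Finite V] [Fintype ι] [DecidableEq ι] {t : ℕ} (r : ℕ)
    [Fintype {S : Submodule F V // finrank F S = t}] {X : ι → Submodule F V}
    (hX : ∀ i, finrank F (X i) ≤ t) :
    inclusionMatrix k t X *
        inclusionMatrix k r (fun S : {S : Submodule F V // finrank F S = t} => S.1) =
      Matrix.diagonal (fun i =>
        (gaussBinom (Fintype.card F) (r - finrank F (X i)) (t - finrank F (X i)) : k)) *
          inclusionMatrix k r X := by
  ext i W
  rw [Matrix.diagonal_mul, Matrix.mul_apply]
  simpa [inclusionMatrix, W.2] using sum_boole_le_mul_boole_le (A := k) W.1 (hX i)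

variable {k}

theorem linearIndependent_row_inclusionMatrix {r : ℕ} {X : ι → Submodule F V}
    (h : LinearIndependent k (inclusionVec k r ∘ X)) :
    LinearIndependent k (inclusionMatrix k r X).row := by
  refine .of_comp (Function.ExtendByZero.linearMap k Subtype.val) ?_
  convert h using 1
  funext i
  rw [Function.comp_apply, Function.comp_apply, ← extendByZero_inclusionVec]
  simp only [inclusionVec_apply_coe k X]
  rfl

end InclusionMatrix

variable {F V O : Type*} [Field F] [Fintype F] [AddCommGroup V] [Module F V] [Finite V]
  [CommRing O] [IsLocalRing O]

omit [Fintype F] in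
theorem IsInclusionBasis.exists_equiv [Finite F] {k : Type*} [Field k] {s : ℕ}
    {B : Finset (Submodule F V)} (hB : IsInclusionBasis k s B) :
    Nonempty ({U : Submodule F V // finrank F U = s} ≃ B) := by
  have := Fintype.ofFinite F
  rw [← Finite.card_eq, card_submodule_finrank_eq, Nat.card_eq_fintype_card, Fintype.card_coe,
    hB.card_eq]

theorem IsInclusionBasis.linearIndependent_row_map_residue {s r : ℕ} {B : Finset (Submodule F V)}
    (hB : IsInclusionBasis (ResidueField O) s B) (hq : (Fintype.card F : ResidueField O) ≠ 0)
    (hsr : s ≤ r) (hr : s + r ≤ finrank F V) {ι : Type*} {e : ι → B}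
    (he : Function.Injective e) :
    LinearIndependent (ResidueField O)
      ((inclusionMatrix O r fun i => (e i).1).map (residue O)).row := by
  rw [map_inclusionMatrix]
  exact linearIndependent_row_inclusionMatrix
    ((hB.linearIndepOn_inclusionVec hq hsr hr).comp e he)

theorem IsInclusionBasis.map_univ_finrank_eq {k : Type*} [Field k] {s : ℕ}
    {B : Finset (Submodule F V)} (hB : IsInclusionBasis k s B) {ι : Type*} [Fintype ι] (e : ι ≃ B)
    {β : Type*} (g : ℕ → β) :
    Finset.univ.val.map (fun i => g (finrank F (e i).1)) =
      (Finset.range (s + 1)).val.bind fun i =>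
        Multiset.replicate
          (if i = 0 then 1 else
            gaussBinom (Fintype.card F) (finrank F V) i -
              gaussBinom (Fintype.card F) (finrank F V) (i - 1)) (g i) := by
  have map_univ : (Finset.univ : Finset ι).val.map (fun i => (e i).1) = B.val := by
    calc (Finset.univ : Finset ι).val.map (fun i => (e i).1)
        = ((Finset.univ.map e.toEmbedding).map (Function.Embedding.subtype _)).val := by
          rw [Finset.map_map, Finset.map_val]; rfl
      _ = B.val := by rw [Finset.map_univ_equiv, ← Finset.attach_eq_univ, Finset.attach_map_val]
  rw [← Function.comp_def (fun X : Submodule F V => g (finrank F X)), ← Multiset.map_map, map_univ,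
    map_val_eq_bind_replicate_card_fiber hB.finrank_le]
  refine Multiset.bind_congr fun i hi => ?_
  rw [hB.card_filter_finrank_eq (Finset.mem_range_succ_iff.1 hi)]

theorem subspace_inclusion_diagonal_form_ladic_general {s r : ℕ} (hq : IsUnit (Fintype.card F : O))
    (hsr : s ≤ r) (hr : s + r ≤ finrank F V)
    [Fintype {U : Submodule F V // finrank F U = s}]
    [Fintype {U : Submodule F V // finrank F U = r}] :
    ∃ (P : Matrix {U : Submodule F V // finrank F U = s} {U : Submodule F V // finrank F U = s} O)
      (Q : Matrix {U : Submodule F V // finrank F U = r} {U : Submodule F V // finrank F U = r} O)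
      (σ : {U : Submodule F V // finrank F U = s} ↪ {U : Submodule F V // finrank F U = r})
      (d : {U : Submodule F V // finrank F U = s} → O),
      IsUnit P.det ∧ IsUnit Q.det ∧
      P * (Matrix.of fun (U : {U : Submodule F V // finrank F U = s})
            (W : {U : Submodule F V // finrank F U = r}) =>
          if (U : Submodule F V) ≤ W then (1 : O) else 0) * Q =
        Matrix.of (fun U W => if W = σ U then d U else 0) ∧
      Finset.univ.val.map d =
        (Finset.range (s + 1)).val.bind fun i =>
          Multiset.replicate
            (if i = 0 then 1 else
              gaussBinom (Fintype.card F) (finrank F V) i -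
                gaussBinom (Fintype.card F) (finrank F V) (i - 1))
            (gaussBinom (Fintype.card F) (r - i) (s - i) : O) := by
  have hq' : (Fintype.card F : ResidueField O) ≠ 0 := by simpa using (hq.map (residue O)).ne_zero
  obtain ⟨B, hB⟩ := exists_isInclusionBasis (V := V) hq' (by lia : s + s ≤ finrank F V)
  obtain ⟨e⟩ := hB.exists_equiv
  obtain ⟨Q, σ, hP, hQ, hPAQ⟩ := exists_diagonal_form_of_mul_eq_diagonal_mul
    (hB.linearIndependent_row_map_residue hq' le_rfl (by lia) e.injective)
    (hB.linearIndependent_row_map_residue hq' hsr hr e.injective)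
    (inclusionMatrix_mul O r fun U => hB.finrank_le _ (e U).2)
  exact ⟨_, Q, σ, _, hP, hQ, hPAQ, 
    hB.map_univ_finrank_eq e fun i => (gaussBinom (Fintype.card F) (r - i) (s - i) : O)⟩

end DiagonalForm

theorem isUnit_natCast_padicInt {p : ℕ} [Fact p.Prime] {n : ℕ} (h : ¬p ∣ n) :
    IsUnit (n : ℤ_[p]) := by
  rwa [PadicInt.isUnit_iff, PadicInt.norm_natCast_eq_one_iff,
    Nat.Prime.coprime_iff_not_dvd Fact.out]

/-- James/Chandler: let `V = F^{n+1}` for a finite field `F`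
with `q` elements, `s ≤ r`, `s + r ≤ n + 1`, and let `A_{s,r}` be the inclusion
matrix of `s`-dimensional subspaces in `r`-dimensional subspaces.  For any
prime `ℓ` not dividing `q`, over the `ℓ`-adic integers `ℤ_ℓ` the matrix
`A_{s,r}` has a diagonal form with diagonal entries the Gaussian binomial
coefficients `[r-i choose s-i]_q`, each with multiplicity
`[n+1 choose i]_q - [n+1 choose i-1]_q`, for `0 ≤ i ≤ s`. -/
theorem subspace_inclusion_diagonal_form_ladic
    (F : Type*) [Field F] [Fintype F] (n s r : ℕ)
    (hsr : s ≤ r) (hrn : s + r ≤ n + 1)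
    (ℓ : ℕ) [Fact ℓ.Prime] (hℓ : ¬ ℓ ∣ Fintype.card F)
    [Fintype {U : Submodule F (Fin (n + 1) → F) // Module.finrank F U = s}]
    [Fintype {U : Submodule F (Fin (n + 1) → F) // Module.finrank F U = r}] :
    ∃ (P : Matrix {U : Submodule F (Fin (n + 1) → F) // Module.finrank F U = s}
          {U : Submodule F (Fin (n + 1) → F) // Module.finrank F U = s} ℤ_[ℓ])
      (Q : Matrix {U : Submodule F (Fin (n + 1) → F) // Module.finrank F U = r}
          {U : Submodule F (Fin (n + 1) → F) // Module.finrank F U = r} ℤ_[ℓ])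
      (σ : {U : Submodule F (Fin (n + 1) → F) // Module.finrank F U = s} ↪
          {U : Submodule F (Fin (n + 1) → F) // Module.finrank F U = r})
      (d : {U : Submodule F (Fin (n + 1) → F) // Module.finrank F U = s} → ℤ_[ℓ]),
      IsUnit P.det ∧ IsUnit Q.det ∧
      P * (Matrix.of fun (U : {U : Submodule F (Fin (n + 1) → F) // Module.finrank F U = s})
            (W : {U : Submodule F (Fin (n + 1) → F) // Module.finrank F U = r}) =>
          if (U : Submodule F (Fin (n + 1) → F)) ≤ (W : Submodule F (Fin (n + 1) → F))
          then (1 : ℤ_[ℓ]) else 0) * Q =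
        Matrix.of (fun U W => if W = σ U then d U else 0) ∧
      Finset.univ.val.map d =
        (Finset.range (s + 1)).val.bind fun i =>
          Multiset.replicate
            (if i = 0 then 1 else
              gaussBinom (Fintype.card F) (n + 1) i -
                gaussBinom (Fintype.card F) (n + 1) (i - 1))
            ((gaussBinom (Fintype.card F) (r - i) (s - i) : ℤ_[ℓ])) := by
  have hr : s + r ≤ finrank F (Fin (n + 1) → F) := by rwa [finrank_fin_fun]
  simpa only [finrank_fin_fun] using
    subspace_inclusion_diagonal_form_ladic_general (isUnit_natCast_padicInt hℓ) hsr hr
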